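/- Let k ∈ {0,1}, p > 1, and f, g ∈ ℓ^{2,k}(ℤ^d). Then the defocusing semilinear wave equation ∂_t² u(x,t) − Δu(x,t) = −|u(x,t)|^{p−1}u(x,t) on ℤ^d with initial data u(·,0) = f, ∂_t u(·,0) = g has a unique global classical solution: for every T > 0 there is a unique u ∈ C²([0,T]; ℓ^{2,k}(ℤ^d)) satisfying the equation on ℤ^d × [0,T] with these initial data. -/

import Mathlib

open scoped BigOperators ENNReal NNReal
open MeasureTheory Filter

noncomputable section

/-- Kernel `φⱼ` of the discrete partial derivative on `ℤ^d`:
`φⱼ(m) = -4i/(π(4a²-1))` if `m = a·eⱼ`, and `0` otherwise. -/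
def phi (d : ℕ) (j : Fin d) (m : Fin d → ℤ) : ℂ :=
  if ∀ i, i ≠ j → m i = 0 then
    (-4 * Complex.I) / ((Real.pi : ℂ) * (4 * (m j : ℂ) ^ 2 - 1))
  else 0

/-- Discrete convolution on `ℤ^d`. -/
def dconv {d : ℕ} (u v : (Fin d → ℤ) → ℂ) (k : Fin d → ℤ) : ℂ :=
  ∑' m, u m * v (k - m)

/-- Discrete partial derivative `∂ⱼ u = u ∗ φⱼ`. -/
def pd {d : ℕ} (j : Fin d) (u : (Fin d → ℤ) → ℂ) : (Fin d → ℤ) → ℂ :=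
  dconv u (phi d j)

/-- Japanese bracket `⟨m⟩ = (1+|m|²)^{1/2}`. -/
def jap {d : ℕ} (m : Fin d → ℤ) : ℝ :=
  Real.sqrt (1 + ∑ i, ((m i : ℝ)) ^ 2)

open scoped Classical in
/-- `ℓ^p` norm on `ℤ^d` (valued in `ℝ≥0∞`), `1 ≤ p ≤ ∞`. -/
def lpn {d : ℕ} (p : ℝ≥0∞) (f : (Fin d → ℤ) → ℂ) : ℝ≥0∞ :=
  if p = ⊤ then ⨆ m, (‖f m‖₊ : ℝ≥0∞)
  else (∑' m, (‖f m‖₊ : ℝ≥0∞) ^ p.toReal) ^ (1 / p.toReal)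

/-- Weighted `ℓ^{2,k}` norm: the `ℓ²` norm of `m ↦ ⟨m⟩^k f(m)`. -/
def w2 {d : ℕ} (k : ℕ) (f : (Fin d → ℤ) → ℂ) : ℝ≥0∞ :=
  lpn 2 (fun m => ((jap m ^ k : ℝ) : ℂ) * f m)

/-- Discrete Laplacian on `ℤ^d`. -/
def lap {d : ℕ} (u : (Fin d → ℤ) → ℂ) (x : Fin d → ℤ) : ℂ :=
  ∑ j, (u (x + Pi.single j 1) + u (x - Pi.single j 1) - 2 * u x)

/-- Continuity of a curve `t ↦ f(·,t)` into `ℓ^{2,k}(ℤ^d)` on a set `S` of times. -/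
def ContW {d : ℕ} (k : ℕ) (S : Set ℝ) (f : ℝ → (Fin d → ℤ) → ℂ) : Prop :=
  ∀ t ∈ S, Tendsto (fun s => w2 k (fun m => f s m - f t m))
    (nhdsWithin t S) (nhds (0 : ℝ≥0∞))

/-- `f'` is the derivative (in the `ℓ^{2,k}(ℤ^d)` norm) of the curve `t ↦ f(·,t)` on `S`. -/
def DerivW {d : ℕ} (k : ℕ) (S : Set ℝ) (f f' : ℝ → (Fin d → ℤ) → ℂ) : Prop :=
  ∀ t ∈ S, Tendsto
    (fun s => w2 k (fun m => (s - t)⁻¹ • (f s m - f t m) - f' t m))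
    (nhdsWithin t (S \ {t})) (nhds (0 : ℝ≥0∞))

/-- `u ∈ C²(S; ℓ^{2,k}(ℤ^d))`, with first and second time derivatives `u1`, `u2`. -/
structure IsC2 {d : ℕ} (k : ℕ) (S : Set ℝ) (u u1 u2 : ℝ → (Fin d → ℤ) → ℂ) : Prop where
  mem0 : ∀ t ∈ S, w2 k (u t) < ⊤
  mem1 : ∀ t ∈ S, w2 k (u1 t) < ⊤
  mem2 : ∀ t ∈ S, w2 k (u2 t) < ⊤
  cont0 : ContW k S u
  cont1 : ContW k S u1
  cont2 : ContW k S u2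
  hder1 : DerivW k S u u1
  hder2 : DerivW k S u1 u2

/-- `u` (with time derivatives `u1`, `u2`) is a classical solution in
`C²(S; ℓ^{2,k}(ℤ^d))` of the power-nonlinearity wave equation
`∂ₜ²u - Δu = μ|u|^{p-1}u` with data `u(·,0)=f`, `∂ₜu(·,0)=g`. -/
def PSol (d k : ℕ) (p μ : ℝ) (f g : (Fin d → ℤ) → ℂ)
    (S : Set ℝ) (u u1 u2 : ℝ → (Fin d → ℤ) → ℂ) : Prop :=
  IsC2 k S u u1 u2 ∧
    (∀ t ∈ S, ∀ x,
      u2 t x - lap (u t) x = (μ : ℂ) * ((‖u t x‖ ^ (p - 1) : ℝ) : ℂ) * u t x) ∧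
    (∀ x, u 0 x = f x) ∧ (∀ x, u1 0 x = g x)

/-!
Replacing the power nonlinearity `|u|^{p-1}u` by `min(|u|, R)^{p-1}u` makes the equation an ordinary
differential equation in `ℓ^{2,k} × ℓ^{2,k}` with a globally Lipschitz vector field, hence globally
and uniquely solvable. A classical solution is bounded on `[0, T]`, so it solves a truncated
equation; uniqueness follows. For existence, a solution of the truncated equation has to be bounded
independently of `R`. The energy `|∂ₜu|² + |u|² + P(|u|²)` of a single site, where `P` is the
potential of the nonlinearity, has time derivative `2⟨∂ₜu, Δu + u⟩`: the nonlinearity drops out, and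
since `Δ` is bounded on `ℓ^∞(ℤ^d)` what remains is at most a constant times the supremum of the
energies of all sites. Grönwall's inequality for that supremum gives the bound.
-/

section Radial

variable {E : Type*} [NormedAddCommGroup E] [NormedSpace ℝ E]

lemma lipschitzWith_radial_smul {a : ℝ → ℝ} {M c : ℝ} (haM : ∀ r, 0 ≤ r → |a r| ≤ M)
    (hac : ∀ r s, 0 ≤ r → r ≤ s → |a s - a r| * r ≤ c * (s - r)) (hc : 0 ≤ c) :
    LipschitzWith (M + c).toNNReal fun x : E => a ‖x‖ • x := by
  refine LipschitzWith.of_dist_le' fun x y => ?_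
  simp only [dist_eq_norm]
  wlog h : ‖y‖ ≤ ‖x‖ generalizing x y
  · rw [norm_sub_rev, norm_sub_rev x]
    exact this y x (le_of_not_ge h)
  calc ‖a ‖x‖ • x - a ‖y‖ • y‖ = ‖a ‖x‖ • (x - y) + (a ‖x‖ - a ‖y‖) • y‖ := by congr 1; module
    _ ≤ |a ‖x‖| * ‖x - y‖ + |a ‖x‖ - a ‖y‖| * ‖y‖ :=
      norm_add_le_of_le (norm_smul_le _ _) (norm_smul_le _ _)
    _ ≤ M * ‖x - y‖ + c * (‖x‖ - ‖y‖) :=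
      add_le_add (by gcongr; exact haM _ (norm_nonneg x)) (hac _ _ (norm_nonneg y) h)
    _ ≤ M * ‖x - y‖ + c * ‖x - y‖ := by
      gcongr
      exact norm_sub_norm_le x y
    _ = (M + c) * ‖x - y‖ := (add_mul _ _ _).symm

/-- The radial retraction of a normed space onto the closed ball of radius `ρ` about the origin.
Dividing by `max ρ ‖x‖` instead of by `‖x‖` avoids a case distinction. -/
def radialProj (ρ : ℝ) (x : E) : E := (ρ / max ρ ‖x‖) • x

lemma radialProj_of_norm_le {ρ : ℝ} (hρ : 0 < ρ) {x : E} (hx : ‖x‖ ≤ ρ) : radialProj ρ x = x := by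
  rw [radialProj, max_eq_left hx, div_self hρ.ne', one_smul]

lemma norm_radialProj {ρ : ℝ} (hρ : 0 < ρ) (x : E) :
    ‖radialProj ρ x‖ = min ρ ‖x‖ := by
  have hmax : 0 < max ρ ‖x‖ := lt_max_of_lt_left hρ
  rw [radialProj, norm_smul, Real.norm_of_nonneg (by positivity), div_mul_eq_mul_div,
    ← min_mul_max, mul_div_cancel_right₀ _ hmax.ne']

lemma lipschitzWith_radialProj {ρ : ℝ} (hρ : 0 < ρ) :
    LipschitzWith 2 (radialProj ρ : E → E) := by
  have hmax : ∀ r, 0 < max ρ r := fun r => lt_max_of_lt_left hρ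
  have hone : ∀ r, |ρ / max ρ r| ≤ 1 := fun r => by
    rw [abs_of_pos (div_pos hρ (hmax r))]
    exact div_le_one_of_le₀ (le_max_left _ _) (hmax r).le
  have hvar : ∀ r s, 0 ≤ r → r ≤ s → |ρ / max ρ s - ρ / max ρ r| * r ≤ 1 * (s - r) := by
    intro r s hr hrs
    have hr' := hmax r
    have hs' := hmax s
    have hle : max ρ r ≤ max ρ s := max_le_max_left ρ hrs
    have hdiff : max ρ s - max ρ r ≤ s - r := by
      rw [sub_le_iff_le_add]
      exact max_le (by linarith [le_max_left ρ r]) (by linarith [le_max_right ρ r])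
    calc |ρ / max ρ s - ρ / max ρ r| * r
        = (ρ / max ρ s) * (r / max ρ r) * (max ρ s - max ρ r) := by
          rw [abs_sub_comm, abs_of_nonneg (sub_nonneg.2 (by gcongr))]
          field_simp
      _ ≤ 1 * 1 * (s - r) := by
          gcongr
          · exact div_le_one_of_le₀ (le_max_left _ _) hs'.le
          · exact div_le_one_of_le₀ (le_max_right _ _) hr'.le
      _ = 1 * (s - r) := by rw [one_mul]
  have h := lipschitzWith_radial_smul (E := E) (fun r _ => hone r) hvar zero_le_one
  rwa [one_add_one_eq_two, Real.toNNReal_ofNat] at h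

/-- The power nonlinearity `‖x‖ ^ q • x` with its amplitude frozen beyond `‖x‖ = R`, which makes it
globally Lipschitz. -/
def truncPow (q R : ℝ) (x : E) : E := min ‖x‖ R ^ q • x

lemma truncPow_of_norm_le {q R : ℝ} {x : E} (hx : ‖x‖ ≤ R) : truncPow q R x = ‖x‖ ^ q • x := by
  rw [truncPow, min_eq_left hx]

-- Bernoulli's inequality for `a / b`, cleared of denominators.
lemma rpow_sub_rpow_mul_le {q a b : ℝ} (hq : 0 ≤ q) (ha : 0 ≤ a) (hab : a ≤ b) :
    (b ^ q - a ^ q) * a ≤ q * b ^ q * (b - a) := by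
  rcases ha.eq_or_lt with rfl | ha
  · simpa using mul_nonneg (mul_nonneg hq (Real.rpow_nonneg hab q)) hab
  have hb : 0 < b := ha.trans_le hab
  have hbernoulli : 1 + (1 + q) * (a / b - 1) ≤ a / b * (a ^ q / b ^ q) := by
    have h := one_add_mul_self_le_rpow_one_add (s := a / b - 1) (p := 1 + q)
      (by linarith [div_pos ha hb]) (by linarith)
    rwa [add_sub_cancel, Real.rpow_one_add' (by positivity) (by positivity),
      Real.div_rpow ha.le hb.le] at h
  have : 0 < b ^ q := Real.rpow_pos_of_pos hb q
  calc (b ^ q - a ^ q) * a = b ^ q * a - b * b ^ q * (a / b * (a ^ q / b ^ q)) := by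
        field_simp
    _ ≤ b ^ q * a - b * b ^ q * (1 + (1 + q) * (a / b - 1)) := by gcongr
    _ = q * b ^ q * (b - a) := by field_simp; ring

lemma lipschitzWith_truncPow {q R : ℝ} (hq : 0 ≤ q) (hR : 0 ≤ R) :
    LipschitzWith (R ^ q + q * R ^ q).toNNReal (truncPow q R : E → E) := by
  refine lipschitzWith_radial_smul (a := fun r => min r R ^ q) (fun r hr => ?_)
    (fun r s hr hrs => ?_) (by positivity)
  · rw [abs_of_nonneg (by positivity)]
    gcongr
    exact min_le_right r R
  · rcases le_total R r with hRr | hrR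
    · rw [min_eq_right hRr, min_eq_right (hRr.trans hrs), sub_self, abs_zero, zero_mul]
      have := sub_nonneg.2 hrs
      positivity
    have hr_le : r ≤ min s R := le_min hrs hrR
    have hmin : 0 ≤ min s R := hr.trans hr_le
    rw [min_eq_left hrR, abs_of_nonneg (sub_nonneg.2 (by gcongr))]
    calc (min s R ^ q - r ^ q) * r ≤ q * min s R ^ q * (min s R - r) :=
          rpow_sub_rpow_mul_le hq hr hr_le
      _ ≤ q * R ^ q * (s - r) := by
          gcongr
          exacts [min_le_right s R, min_le_left s R]

end Radial

section Ode

variable {E : Type*} [NormedAddCommGroup E]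

lemma norm_le_mul_norm_add_of_lipschitzWith {F : E → E} {K : ℝ≥0} (hF : LipschitzWith K F)
    (x : E) : ‖F x‖ ≤ K * ‖x‖ + ‖F 0‖ := by
  have h := hF.norm_sub_le x 0
  rw [sub_zero] at h
  linarith [norm_le_norm_sub_add (F x) (F 0)]

variable [NormedSpace ℝ E]

lemma hasDerivWithinAt_Ici_of_Icc {α : ℝ → E} {α' : E} {a b t : ℝ} (ht : t ∈ Set.Ico a b)
    (h : HasDerivWithinAt α α' (Set.Icc a b) t) : HasDerivWithinAt α α' (Set.Ici t) t :=
  h.mono_of_mem_nhdsWithin (Icc_mem_nhdsGE_of_mem ht)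

lemma exists_hasDerivWithinAt_of_bounded [CompleteSpace E] {G : E → E} {K L : ℝ≥0}
    (hG : LipschitzWith K G) (hGL : ∀ x, ‖G x‖ ≤ L) (x₀ : E) {a b : ℝ} (hab : a ≤ b) :
    ∃ α : ℝ → E, α a = x₀ ∧ ∀ t ∈ Set.Icc a b, HasDerivWithinAt α (G (α t)) (Set.Icc a b) t := by
  have hpl : IsPicardLindelof (fun _ => G) (⟨a, le_rfl, hab⟩ : Set.Icc a b) x₀
      (L * (b - a).toNNReal) 0 L K := by
    refine .of_time_independent (fun x _ => hGL x) hG.lipschitzOnWith ?_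
    simp [hab]
  exact hpl.exists_eq_forall_mem_Icc_hasDerivWithinAt₀

-- Picard–Lindelöf applies to the bounded field `F ∘ radialProj ρ`; by Grönwall's inequality its
-- solution never leaves the ball of radius `ρ`, where that field agrees with `F`.
theorem exists_hasDerivWithinAt_of_lipschitzWith [CompleteSpace E] {F : E → E} {K : ℝ≥0}
    (hF : LipschitzWith K F) (x₀ : E) {a b : ℝ} (hab : a ≤ b) :
    ∃ α : ℝ → E, α a = x₀ ∧ ∀ t ∈ Set.Icc a b, HasDerivWithinAt α (F (α t)) (Set.Icc a b) t := by
  set ρ : ℝ := max 1 (gronwallBound ‖x₀‖ K ‖F 0‖ (b - a))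
  have hρ : 0 < ρ := lt_max_of_lt_left one_pos
  have hproj (x : E) : ‖F (radialProj ρ x)‖ ≤ K * min ρ ‖x‖ + ‖F 0‖ :=
    norm_radialProj hρ x ▸ norm_le_mul_norm_add_of_lipschitzWith hF _
  obtain ⟨α, hα₀, hα⟩ := exists_hasDerivWithinAt_of_bounded
    (hF.comp (lipschitzWith_radialProj hρ)) (L := K * ρ.toNNReal + ‖F 0‖₊) (fun x => by
      simpa [hρ.le] using (hproj x).trans (by gcongr; exact min_le_left _ _)) x₀ hab
  have hα_le : ∀ t ∈ Set.Icc a b, ‖α t‖ ≤ ρ := fun t ht => by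
    refine (norm_le_gronwallBound_of_norm_deriv_right_le
      (fun s hs => (hα s hs).continuousWithinAt)
      (fun s hs => hasDerivWithinAt_Ici_of_Icc hs (hα s (Set.Ico_subset_Icc_self hs)))
      (congrArg norm hα₀).le
      (fun s _ => (hproj (α s)).trans (by gcongr; exact min_le_right _ _)) t ht).trans ?_
    exact (gronwallBound_mono (norm_nonneg _) (norm_nonneg _) K.2 (by linarith [ht.2])).trans
      (le_max_right _ _)
  refine ⟨α, hα₀, fun t ht => ?_⟩
  simpa only [Function.comp_apply, radialProj_of_norm_le hρ (hα_le t ht)] using hα t ht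

end Ode

section Gronwall

variable {ι : Type*} {e e' : ι → ℝ → ℝ} {C E T : ℝ}

lemma le_add_half_mul_exp_of_deriv_le_iSup (hC : 0 ≤ C)
    (hder : ∀ y, ∀ t ∈ Set.Icc 0 T, HasDerivWithinAt (e y) (e' y t) (Set.Icc 0 T) t)
    (hle : ∀ t ∈ Set.Icc 0 T, ∀ M, (∀ y, e y t ≤ M) → ∀ y, e' y t ≤ C * M)
    (hinit : ∀ y, e y 0 ≤ E) (hE : 0 ≤ E) {S : ℝ} (hS : 0 ≤ S)
    (h : ∀ y, ∀ t ∈ Set.Icc 0 T, e y t ≤ S * Real.exp (2 * C * t)) :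
    ∀ y, ∀ t ∈ Set.Icc 0 T, e y t ≤ (E + S / 2) * Real.exp (2 * C * t) := by
  intro y t ht
  have hbdry (s : ℝ) : HasDerivAt (fun s => E + S / 2 * (Real.exp (2 * C * s) - 1))
      (C * (S * Real.exp (2 * C * s))) s := by
    have hlin : HasDerivAt (fun s : ℝ => 2 * C * s) (2 * C) s := by
      simpa using (hasDerivAt_id s).const_mul (2 * C)
    refine (((hlin.exp.sub_const 1).const_mul (S / 2)).const_add E).congr_deriv ?_
    ring
  have hint : e y t ≤ E + S / 2 * (Real.exp (2 * C * t) - 1) :=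
    image_le_of_deriv_right_le_deriv_boundary (fun s hs => (hder y s hs).continuousWithinAt)
      (fun s hs => hasDerivWithinAt_Ici_of_Icc hs (hder y s (Set.Ico_subset_Icc_self hs)))
      (by simpa using hinit y) (fun s _ => (hbdry s).continuousAt.continuousWithinAt)
      (fun s _ => (hbdry s).hasDerivWithinAt)
      (fun s hs => hle s (Set.Ico_subset_Icc_self hs) _
        (fun z => h z s (Set.Ico_subset_Icc_self hs)) y) ht
  have hexp : 1 ≤ Real.exp (2 * C * t) := Real.one_le_exp (mul_nonneg (by positivity) ht.1)
  nlinarith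

-- Integrating `hle` halves the excess over `2 * E` of any a priori bound for
-- `exp (-2 * C * t) * e y t`; iterating removes it.
theorem le_mul_exp_of_deriv_le_iSup (hC : 0 ≤ C)
    (hder : ∀ y, ∀ t ∈ Set.Icc 0 T, HasDerivWithinAt (e y) (e' y t) (Set.Icc 0 T) t)
    (hle : ∀ t ∈ Set.Icc 0 T, ∀ M, (∀ y, e y t ≤ M) → ∀ y, e' y t ≤ C * M)
    (hinit : ∀ y, e y 0 ≤ E) (hE : 0 ≤ E) {B : ℝ} (hB : ∀ y, ∀ t ∈ Set.Icc 0 T, e y t ≤ B)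
    (y : ι) {t : ℝ} (ht : t ∈ Set.Icc 0 T) : e y t ≤ 2 * E * Real.exp (2 * C * t) := by
  have hiter (n : ℕ) : ∀ z, ∀ s ∈ Set.Icc 0 T,
      e z s ≤ (2 * E + |B| / 2 ^ n) * Real.exp (2 * C * s) := by
    induction n with
    | zero =>
      intro z s hs
      have hexp : 1 ≤ Real.exp (2 * C * s) := Real.one_le_exp (mul_nonneg (by positivity) hs.1)
      calc e z s ≤ |B| := (hB z s hs).trans (le_abs_self B)
        _ ≤ (2 * E + |B| / 2 ^ 0) * 1 := by linarith [pow_zero (2 : ℝ), div_one |B|]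
        _ ≤ _ := by gcongr
    | succ n ih =>
      intro z s hs
      have hstep :=
        le_add_half_mul_exp_of_deriv_le_iSup hC hder hle hinit hE (by positivity) ih z s hs
      exact hstep.trans_eq (by ring)
  have hlim : Tendsto (fun n : ℕ => (2 * E + |B| / 2 ^ n) * Real.exp (2 * C * t)) atTop
      (nhds (2 * E * Real.exp (2 * C * t))) := by
    have hpow : Tendsto (fun n : ℕ => |B| / 2 ^ n) atTop (nhds 0) :=
      tendsto_const_nhds.div_atTop (tendsto_pow_atTop_atTop_of_one_lt one_lt_two)
    simpa using (hpow.const_add (2 * E)).mul_const _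
  exact ge_of_tendsto' hlim fun n => hiter n y t ht

end Gronwall

section Weight

variable {d : ℕ}

lemma one_le_jap (m : Fin d → ℤ) : 1 ≤ jap m := by
  rw [jap, Real.one_le_sqrt, le_add_iff_nonneg_right]
  positivity

lemma jap_pos (m : Fin d → ℤ) : 0 < jap m := one_pos.trans_le (one_le_jap m)

lemma jap_add_le (m n : Fin d → ℤ) : jap (m + n) ≤ √2 * jap m * jap n := by
  have hsq : ∑ i, ((m + n) i : ℝ) ^ 2 ≤ 2 * ∑ i, (m i : ℝ) ^ 2 + 2 * ∑ i, (n i : ℝ) ^ 2 := by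
    rw [Finset.mul_sum, Finset.mul_sum, ← Finset.sum_add_distrib]
    refine Finset.sum_le_sum fun i _ => ?_
    rw [Pi.add_apply, Int.cast_add, ← mul_add]
    exact add_sq_le
  have hmn : 0 ≤ (∑ i, (m i : ℝ) ^ 2) * ∑ i, (n i : ℝ) ^ 2 := by positivity
  simp only [jap]
  rw [← Real.sqrt_mul zero_le_two, ← Real.sqrt_mul (by positivity)]
  exact Real.sqrt_le_sqrt (by linarith)

lemma jap_pow_le_mul_jap_add_pow (k : ℕ) (x a : Fin d → ℤ) :
    jap x ^ k ≤ (√2 * jap (-a)) ^ k * jap (x + a) ^ k := by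
  have := jap_pos x
  rw [← mul_pow]
  gcongr
  simpa [mul_right_comm] using jap_add_le (x + a) (-a)

end Weight

section Lift

variable {d k : ℕ}

/-- The Hilbert space `ℓ²(ℤ^d)`, on which all curves in `ℓ^{2,k}(ℤ^d)` are represented by means of
`unweight k`. -/
abbrev L2 (d : ℕ) : Type := lp (fun _ : Fin d → ℤ => ℂ) 2

lemma lpn_coe {p : ℝ≥0∞} [Fact (1 ≤ p)] (hp : p ≠ ⊤) (U : lp (fun _ : Fin d → ℤ => ℂ) p) :
    lpn p U = ‖U‖ₑ := by
  have hp₀ : 0 < p.toReal := ENNReal.toReal_pos (one_pos.trans_le Fact.out).ne' hp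
  have hsum : Summable fun m => ‖U m‖ ^ p.toReal := (memℓp_gen_iff hp₀).1 (lp.memℓp U)
  rw [lpn, if_neg hp, ← ofReal_norm, lp.norm_eq_tsum_rpow hp₀,
    ← ENNReal.ofReal_rpow_of_nonneg (by positivity) (by positivity),
    ENNReal.ofReal_tsum_of_nonneg (fun _ => by positivity) hsum]
  simp only [← ENNReal.ofReal_rpow_of_nonneg (norm_nonneg _) hp₀.le, ofReal_norm, enorm_eq_nnnorm]

lemma memℓp_of_lpn_lt_top {p : ℝ≥0∞} (hp : 0 < p.toReal) {f : (Fin d → ℤ) → ℂ}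
    (hf : lpn p f < ⊤) : Memℓp f p := by
  rw [lpn, if_neg (ENNReal.toReal_pos_iff.1 hp).2.ne,
    ENNReal.rpow_lt_top_iff_of_pos (one_div_pos.2 hp)] at hf
  refine memℓp_gen ((ENNReal.summable_toReal hf.ne).congr fun m => ?_)
  rw [← ENNReal.toReal_rpow, ENNReal.coe_toReal, coe_nnnorm]

/-- The isometry from `ℓ²(ℤ^d)` onto `ℓ^{2,k}(ℤ^d)` dividing by the weight `⟨m⟩^k`. Its codomain
is the space of all functions on `ℤ^d`, where the norm of `ℓ^{2,k}(ℤ^d)` is the possibly infinite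
`w2 k`. -/
def unweight (k : ℕ) : L2 d →ₗ[ℝ] (Fin d → ℤ) → ℂ where
  toFun U m := (jap m ^ k)⁻¹ • U m
  map_add' U V := by ext m; simp
  map_smul' c U := by ext m; simp [mul_left_comm]

lemma unweight_apply (U : L2 d) (m : Fin d → ℤ) : unweight k U m = (jap m ^ k)⁻¹ • U m := rfl

lemma jap_pow_smul_unweight (U : L2 d) (m : Fin d → ℤ) : jap m ^ k • unweight k U m = U m :=
  smul_inv_smul₀ (pow_pos (jap_pos m) k).ne' _

lemma w2_eq (f : (Fin d → ℤ) → ℂ) : w2 k f = lpn 2 fun m => jap m ^ k • f m := by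
  simp only [w2, Complex.real_smul]

lemma w2_unweight (U : L2 d) : w2 k (unweight k U) = ‖U‖ₑ := by
  simp only [w2_eq, jap_pow_smul_unweight]
  exact lpn_coe ENNReal.ofNat_ne_top U

lemma exists_unweight_eq {f : (Fin d → ℤ) → ℂ} (hf : w2 k f < ⊤) : ∃ U, unweight k U = f := by
  rw [w2_eq] at hf
  refine ⟨⟨_, memℓp_of_lpn_lt_top (by norm_num) hf⟩, funext fun m => ?_⟩
  exact inv_smul_smul₀ (pow_pos (jap_pos m) k).ne' _

lemma norm_unweight_apply_le (U : L2 d) (m : Fin d → ℤ) : ‖unweight k U m‖ ≤ ‖U‖ := by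
  rw [unweight_apply, norm_smul, norm_inv, norm_pow, Real.norm_of_nonneg (jap_pos m).le]
  calc (jap m ^ k)⁻¹ * ‖U m‖ ≤ 1 * ‖U m‖ := by
        gcongr
        exact inv_le_one_of_one_le₀ (one_le_pow₀ (one_le_jap m))
    _ ≤ ‖U‖ := by simpa using lp.norm_apply_le_norm two_ne_zero U m

lemma exists_norm_le_of_w2_lt_top {f : (Fin d → ℤ) → ℂ} (hf : w2 k f < ⊤) :
    ∃ B, ∀ x, ‖f x‖ ≤ B := by
  obtain ⟨U, rfl⟩ := exists_unweight_eq hf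
  exact ⟨‖U‖, norm_unweight_apply_le U⟩

lemma unweight_injective : Function.Injective (unweight k : L2 d → (Fin d → ℤ) → ℂ) := by
  intro U V h
  ext m
  rw [← jap_pow_smul_unweight (k := k) U, h, jap_pow_smul_unweight]

variable {S : Set ℝ} {f f' : ℝ → (Fin d → ℤ) → ℂ} {F F' : ℝ → L2 d}

lemma contW_iff (hF : ∀ t ∈ S, unweight k (F t) = f t) : ContW k S f ↔ ContinuousOn F S := by
  refine forall₂_congr fun t ht => ?_
  rw [ContinuousWithinAt, tendsto_iff_edist_tendsto_0]
  refine tendsto_congr' (eventually_mem_nhdsWithin.mono fun s hs => ?_)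
  beta_reduce
  rw [edist_eq_enorm_sub, ← w2_unweight (k := k), map_sub, hF s hs, hF t ht]
  rfl

lemma derivW_iff (hF : ∀ t ∈ S, unweight k (F t) = f t) (hF' : ∀ t ∈ S, unweight k (F' t) = f' t) :
    DerivW k S f f' ↔ ∀ t ∈ S, HasDerivWithinAt F (F' t) S t := by
  refine forall₂_congr fun t ht => ?_
  rw [hasDerivWithinAt_iff_tendsto_slope, tendsto_iff_edist_tendsto_0]
  refine tendsto_congr' (eventually_mem_nhdsWithin.mono fun s hs => ?_)
  beta_reduce
  rw [edist_eq_enorm_sub, slope_def_module, ← w2_unweight (k := k), map_sub, map_smul, map_sub,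
    hF s hs.1, hF t ht, hF' t ht]
  rfl

theorem isC2_iff {u u1 u2 : ℝ → (Fin d → ℤ) → ℂ} :
    IsC2 k S u u1 u2 ↔ ∃ U U1 U2 : ℝ → L2 d,
      (∀ t ∈ S, unweight k (U t) = u t) ∧ (∀ t ∈ S, unweight k (U1 t) = u1 t) ∧
      (∀ t ∈ S, unweight k (U2 t) = u2 t) ∧ (∀ t ∈ S, HasDerivWithinAt U (U1 t) S t) ∧
      (∀ t ∈ S, HasDerivWithinAt U1 (U2 t) S t) ∧ ContinuousOn U2 S := by
  constructor
  · intro h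
    choose! U hU using fun t ht => exists_unweight_eq (h.mem0 t ht)
    choose! U1 hU1 using fun t ht => exists_unweight_eq (h.mem1 t ht)
    choose! U2 hU2 using fun t ht => exists_unweight_eq (h.mem2 t ht)
    exact ⟨U, U1, U2, hU, hU1, hU2, (derivW_iff hU hU1).1 h.hder1, (derivW_iff hU1 hU2).1 h.hder2,
      (contW_iff hU2).1 h.cont2⟩
  · rintro ⟨U, U1, U2, hU, hU1, hU2, hd, hd1, hcont⟩
    have hfin {V : ℝ → L2 d} {v : ℝ → (Fin d → ℤ) → ℂ} (hV : ∀ t ∈ S, unweight k (V t) = v t) :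
        ∀ t ∈ S, w2 k (v t) < ⊤ := fun t ht => by
      rw [← hV t ht, w2_unweight]
      exact enorm_lt_top
    exact ⟨hfin hU, hfin hU1, hfin hU2,
      (contW_iff hU).2 fun t ht => (hd t ht).continuousWithinAt,
      (contW_iff hU1).2 fun t ht => (hd1 t ht).continuousWithinAt,
      (contW_iff hU2).2 hcont, (derivW_iff hU hU1).2 hd, (derivW_iff hU1 hU2).2 hd1⟩

lemma hasDerivWithinAt_unweight_apply {U : ℝ → L2 d} {U' : L2 d} {t : ℝ}
    (h : HasDerivWithinAt U U' S t) (x : Fin d → ℤ) :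
    HasDerivWithinAt (fun s => unweight k (U s) x) (unweight k U' x) S t :=
  ((lp.evalCLM ℝ _ 2 x).hasFDerivAt.comp_hasDerivWithinAt t h).const_smul (jap x ^ k)⁻¹

lemma DerivW.hasDerivWithinAt (hf : ∀ t ∈ S, w2 k (f t) < ⊤) (hf' : ∀ t ∈ S, w2 k (f' t) < ⊤)
    (h : DerivW k S f f') {t : ℝ} (ht : t ∈ S) (x : Fin d → ℤ) :
    HasDerivWithinAt (fun s => f s x) (f' t x) S t := by
  choose! F hF using fun t ht => exists_unweight_eq (hf t ht)
  choose! F' hF' using fun t ht => exists_unweight_eq (hf' t ht)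
  have hx := hasDerivWithinAt_unweight_apply (k := k) ((derivW_iff hF hF').1 h t ht) x
  rw [hF' t ht] at hx
  exact hx.congr_of_mem (fun s hs => congrFun (hF s hs).symm x) ht

lemma ContW.exists_norm_le (hf : ∀ t ∈ S, w2 k (f t) < ⊤) (h : ContW k S f) (hS : IsCompact S) :
    ∃ B, ∀ t ∈ S, ∀ x, ‖f t x‖ ≤ B := by
  choose! F hF using fun t ht => exists_unweight_eq (hf t ht)
  obtain ⟨B, hB⟩ := hS.exists_bound_of_continuousOn ((contW_iff hF).1 h)
  exact ⟨B, fun t ht x => hF t ht ▸ (norm_unweight_apply_le (F t) x).trans (hB t ht)⟩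

end Lift

section LipschitzOperators

lemma exists_lp_of_norm_le_comp {α β V W : Type*} [NormedAddCommGroup V] [NormedAddCommGroup W]
    {p : ℝ≥0∞} (hp : 0 < p.toReal) {σ : α → β} (hσ : σ.Injective) {c : ℝ} (hc : 0 ≤ c) {v : α → V}
    (U : lp (fun _ : β => W) p) (h : ∀ x, ‖v x‖ ≤ c * ‖U (σ x)‖) :
    ∃ V : lp (fun _ : α => V) p, ⇑V = v ∧ ‖V‖ ≤ c * ‖U‖ := by
  have hsum (s : Finset α) : ∑ x ∈ s, ‖v x‖ ^ p.toReal ≤ (c * ‖U‖) ^ p.toReal :=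
    calc ∑ x ∈ s, ‖v x‖ ^ p.toReal ≤ ∑ x ∈ s, (c * ‖U (σ x)‖) ^ p.toReal := by
          gcongr with x
          exact h x
      _ = c ^ p.toReal * ∑ y ∈ s.map ⟨σ, hσ⟩, ‖U y‖ ^ p.toReal := by
          simp [Real.mul_rpow, hc, Finset.mul_sum]
      _ ≤ c ^ p.toReal * ‖U‖ ^ p.toReal := by
          gcongr
          exact lp.sum_rpow_le_norm_rpow hp U _
      _ = (c * ‖U‖) ^ p.toReal := (Real.mul_rpow hc (lp.norm_nonneg' U)).symm
  have hv : Memℓp v p := memℓp_gen' hsum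
  exact ⟨⟨v, hv⟩, rfl,
    lp.norm_le_of_forall_sum_le hp (mul_nonneg hc (lp.norm_nonneg' U)) hsum⟩

variable {d k : ℕ}

/-- The operator `A` on functions on `ℤ^d` maps `ℓ^{2,k}(ℤ^d)` to itself and is Lipschitz
continuous there. It is witnessed by the conjugate `F` of `A` by the isometry `unweight k`. -/
def IsWeightedLipschitz (k : ℕ) (A : ((Fin d → ℤ) → ℂ) → (Fin d → ℤ) → ℂ) : Prop :=
  ∃ (K : ℝ≥0) (F : L2 d → L2 d), LipschitzWith K F ∧ ∀ U, unweight k (F U) = A (unweight k U)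

namespace IsWeightedLipschitz

variable {A B : ((Fin d → ℤ) → ℂ) → (Fin d → ℤ) → ℂ}

lemma add (hA : IsWeightedLipschitz k A) (hB : IsWeightedLipschitz k B) :
    IsWeightedLipschitz k fun u x => A u x + B u x := by
  obtain ⟨K, F, hF, hFA⟩ := hA
  obtain ⟨L, G, hG, hGB⟩ := hB
  refine ⟨K + L, fun U => F U + G U, hF.add hG, fun U => ?_⟩
  rw [map_add, hFA, hGB]
  rfl

lemma zero : IsWeightedLipschitz (d := d) k fun _ _ => 0 :=
  ⟨0, fun _ => 0, .const 0, fun _ => map_zero _⟩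

lemma sum {ι : Type*} (s : Finset ι) {A : ι → ((Fin d → ℤ) → ℂ) → (Fin d → ℤ) → ℂ}
    (hA : ∀ i ∈ s, IsWeightedLipschitz k (A i)) :
    IsWeightedLipschitz k fun u x => ∑ i ∈ s, A i u x := by
  classical
  induction s using Finset.induction_on with
  | empty => simpa using zero
  | insert i s hi ih =>
    simp only [Finset.sum_insert hi]
    exact (hA i (Finset.mem_insert_self i s)).add
      (ih fun j hj => hA j (Finset.mem_insert_of_mem hj))

lemma of_norm_sub_le {σ : (Fin d → ℤ) → Fin d → ℤ} (hσ : σ.Injective) {c : ℝ} (hc : 0 ≤ c)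
    (hA₀ : A 0 = 0) (h : ∀ u v x,
      ‖jap x ^ k • (A u x - A v x)‖ ≤ c * ‖jap (σ x) ^ k • (u (σ x) - v (σ x))‖) :
    IsWeightedLipschitz k A := by
  have hbound (U V : L2 d) (x : Fin d → ℤ) :
      ‖jap x ^ k • (A (unweight k U) x - A (unweight k V) x)‖ ≤ c * ‖(U - V) (σ x)‖ := by
    simpa only [← Pi.sub_apply, ← map_sub, jap_pow_smul_unweight] using
      h (unweight k U) (unweight k V) x
  have hlift (U : L2 d) : ∃ V : L2 d, ⇑V = fun x => jap x ^ k • A (unweight k U) x := by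
    obtain ⟨V, hV, -⟩ := exists_lp_of_norm_le_comp (by norm_num) hσ hc (U - 0) (hbound U 0)
    exact ⟨V, by simpa [hA₀] using hV⟩
  choose F hF using hlift
  refine ⟨c.toNNReal, F, .of_dist_le' fun U V => ?_, fun U => funext fun x => ?_⟩
  · obtain ⟨W, hW, hWle⟩ := exists_lp_of_norm_le_comp (by norm_num) hσ hc (U - V) (hbound U V)
    have hFW : F U - F V = W := lp.ext <| by
      rw [lp.coeFn_sub, hF, hF, hW]
      exact funext fun x => (smul_sub _ _ _).symm
    rwa [dist_eq_norm, dist_eq_norm, hFW]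
  · rw [unweight_apply, hF, inv_smul_smul₀ (pow_pos (jap_pos x) k).ne']

-- Translations are bounded on `ℓ^{2,k}(ℤ^d)` because `⟨m⟩` is submultiplicative up to a constant.
lemma comp_translate {N : ℂ → ℂ} {L : ℝ≥0} (hN : LipschitzWith L N) (hN₀ : N 0 = 0)
    (a : Fin d → ℤ) : IsWeightedLipschitz k fun u x => N (u (x + a)) := by
  have ha := jap_pos (-a)
  refine of_norm_sub_le (add_left_injective a) (c := L * (√2 * jap (-a)) ^ k) (by positivity)
    (funext fun _ => hN₀) fun u v x => ?_
  have hx := jap_pos x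
  have hxa := jap_pos (x + a)
  rw [norm_smul, norm_smul, Real.norm_of_nonneg (by positivity),
    Real.norm_of_nonneg (by positivity)]
  calc jap x ^ k * ‖N (u (x + a)) - N (v (x + a))‖
      ≤ ((√2 * jap (-a)) ^ k * jap (x + a) ^ k) * (L * ‖u (x + a) - v (x + a)‖) :=
        mul_le_mul (jap_pow_le_mul_jap_add_pow k x a) (hN.norm_sub_le _ _) (norm_nonneg _)
          (by positivity)
    _ = L * (√2 * jap (-a)) ^ k * (jap (x + a) ^ k * ‖u (x + a) - v (x + a)‖) := by ring

end IsWeightedLipschitz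

/-- The right-hand side of the semilinear wave equation `∂ₜ²u = Δu + N(u)` on `ℤ^d`. -/
def waveOp (N : ℂ → ℂ) (u : (Fin d → ℤ) → ℂ) (x : Fin d → ℤ) : ℂ := lap u x + N (u x)

theorem isWeightedLipschitz_waveOp {N : ℂ → ℂ} {L : ℝ≥0} (hN : LipschitzWith L N)
    (hN₀ : N 0 = 0) : IsWeightedLipschitz (d := d) k (waveOp N) := by
  have htranslate (a : Fin d → ℤ) : IsWeightedLipschitz k fun u x => u (x + a) :=
    .comp_translate .id rfl a
  have hlap : IsWeightedLipschitz k (lap (d := d)) := by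
    refine .sum _ fun j _ => ?_
    simp only [sub_eq_add_neg]
    refine ((htranslate _).add (htranslate _)).add ?_
    simpa using IsWeightedLipschitz.comp_translate (k := k) (N := fun z => -(2 * z))
      (lipschitzWith_smul (2 : ℂ)).neg (by simp) (0 : Fin d → ℤ)
  have hN' : IsWeightedLipschitz (d := d) k fun u x => N (u x) := by
    simpa only [add_zero] using IsWeightedLipschitz.comp_translate (k := k) hN hN₀ (0 : Fin d → ℤ)
  exact hlap.add hN'

end LipschitzOperators

section EvolutionEquation

variable {d k : ℕ} {A A' : ((Fin d → ℤ) → ℂ) → (Fin d → ℤ) → ℂ} {f g : (Fin d → ℤ) → ℂ}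
  {S : Set ℝ} {T : ℝ} {u u1 u2 v v1 v2 : ℝ → (Fin d → ℤ) → ℂ}

/-- A classical solution in `C²(S; ℓ^{2,k}(ℤ^d))` of the Cauchy problem `∂ₜ²u = A u`, `u(·,0) = f`,
`∂ₜu(·,0) = g`, where `u1` and `u2` are the first two time derivatives of `u`. -/
structure EvolutionSol (k : ℕ) (A : ((Fin d → ℤ) → ℂ) → (Fin d → ℤ) → ℂ) (f g : (Fin d → ℤ) → ℂ)
    (S : Set ℝ) (u u1 u2 : ℝ → (Fin d → ℤ) → ℂ) : Prop where
  isC2 : IsC2 k S u u1 u2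
  eqn : ∀ t ∈ S, u2 t = A (u t)
  init : u 0 = f
  init' : u1 0 = g

namespace EvolutionSol

lemma congr (h : EvolutionSol k A f g S u u1 u2) (hA : ∀ t ∈ S, A (u t) = A' (u t)) :
    EvolutionSol k A' f g S u u1 u2 :=
  { h with eqn := fun t ht => (h.eqn t ht).trans (hA t ht) }

lemma exists_hasDerivWithinAt_lift {F : L2 d → L2 d}
    (hF : ∀ U, unweight k (F U) = A (unweight k U)) (h : EvolutionSol k A f g S u u1 u2) :
    ∃ α : ℝ → L2 d × L2 d, (∀ t ∈ S, unweight k (α t).1 = u t ∧ unweight k (α t).2 = u1 t) ∧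
      ∀ t ∈ S, HasDerivWithinAt α ((α t).2, F (α t).1) S t := by
  obtain ⟨U, U1, U2, hU, hU1, hU2, hd, hd1, -⟩ := isC2_iff.1 h.isC2
  refine ⟨fun t => (U t, U1 t), fun t ht => ⟨hU t ht, hU1 t ht⟩, fun t ht => ?_⟩
  have hFU : F (U t) = U2 t := unweight_injective (k := k) <| by
    rw [hF, hU t ht, hU2 t ht, h.eqn t ht]
  rw [hFU]
  exact (hd t ht).prodMk (hd1 t ht)

lemma lipschitzWith_field {F : L2 d → L2 d} {K : ℝ≥0} (hF : LipschitzWith K F) :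
    LipschitzWith (max 1 K) fun X : L2 d × L2 d => (X.2, F X.1) := by
  simpa using LipschitzWith.prod_snd.prodMk (hF.comp LipschitzWith.prod_fst)

theorem eq_of_isWeightedLipschitz (hA : IsWeightedLipschitz k A)
    (hu : EvolutionSol k A f g (Set.Icc 0 T) u u1 u2)
    (hv : EvolutionSol k A f g (Set.Icc 0 T) v v1 v2) {t : ℝ} (ht : t ∈ Set.Icc 0 T) :
    u t = v t := by
  obtain ⟨K, F, hF, hFA⟩ := hA
  obtain ⟨α, hα, hα'⟩ := hu.exists_hasDerivWithinAt_lift hFA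
  obtain ⟨β, hβ, hβ'⟩ := hv.exists_hasDerivWithinAt_lift hFA
  have h0 : (0 : ℝ) ∈ Set.Icc 0 T := Set.left_mem_Icc.2 (ht.1.trans ht.2)
  have hinit : α 0 = β 0 := by
    ext1 <;> apply unweight_injective (k := k)
    · rw [(hα 0 h0).1, (hβ 0 h0).1, hu.init, hv.init]
    · rw [(hα 0 h0).2, (hβ 0 h0).2, hu.init', hv.init']
  have hαβ : Set.EqOn α β (Set.Icc 0 T) :=
    ODE_solution_unique_of_mem_Icc_right (v := fun _ X => (X.2, F X.1)) (s := fun _ => Set.univ)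
      (fun _ _ => (lipschitzWith_field hF).lipschitzOnWith)
      (fun s hs => (hα' s hs).continuousWithinAt)
      (fun s hs => hasDerivWithinAt_Ici_of_Icc hs (hα' s (Set.Ico_subset_Icc_self hs)))
      (fun _ _ => Set.mem_univ _) (fun s hs => (hβ' s hs).continuousWithinAt)
      (fun s hs => hasDerivWithinAt_Ici_of_Icc hs (hβ' s (Set.Ico_subset_Icc_self hs)))
      (fun _ _ => Set.mem_univ _) hinit
  rw [← (hα t ht).1, hαβ ht, (hβ t ht).1]

end EvolutionSol

theorem exists_evolutionSol (hA : IsWeightedLipschitz k A) (hf : w2 k f < ⊤) (hg : w2 k g < ⊤)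
    (hT : 0 ≤ T) : ∃ u u1 u2, EvolutionSol k A f g (Set.Icc 0 T) u u1 u2 := by
  obtain ⟨K, F, hF, hFA⟩ := hA
  obtain ⟨U₀, hU₀⟩ := exists_unweight_eq hf
  obtain ⟨V₀, hV₀⟩ := exists_unweight_eq hg
  obtain ⟨α, hα₀, hα⟩ := exists_hasDerivWithinAt_of_lipschitzWith
    (EvolutionSol.lipschitzWith_field hF) (U₀, V₀) hT
  have hcont : ContinuousOn (fun t => F (α t).1) (Set.Icc 0 T) :=
    hF.continuous.comp_continuousOn fun t ht => (hα t ht).continuousWithinAt.fst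
  refine ⟨fun t => unweight k (α t).1, fun t => unweight k (α t).2,
    fun t => unweight k (F (α t).1), ?_, fun t _ => hFA _, ?_, ?_⟩
  · exact isC2_iff.2 ⟨_, _, _, fun _ _ => rfl, fun _ _ => rfl, fun _ _ => rfl,
      fun t ht => (hα t ht).fst, fun t ht => (hα t ht).snd, hcont⟩
  · simp only [hα₀, hU₀]
  · simp only [hα₀, hV₀]

end EvolutionEquation

section Energy

/-- The potential of a radial nonlinearity `a(|z|)z`, as a function of `s = |z|²`. -/
def potential (a : ℝ → ℝ) (s : ℝ) : ℝ := ∫ σ in (0 : ℝ)..s, a √σ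

lemma potential_nonneg {a : ℝ → ℝ} (ha₀ : ∀ r, 0 ≤ r → 0 ≤ a r) {s : ℝ} (hs : 0 ≤ s) :
    0 ≤ potential a s :=
  intervalIntegral.integral_nonneg hs fun σ _ => ha₀ _ (Real.sqrt_nonneg σ)

lemma hasDerivAt_potential {a : ℝ → ℝ} (ha : Continuous a) (s : ℝ) :
    HasDerivAt (potential a) (a √s) s :=
  ((ha.comp Real.continuous_sqrt).integral_hasStrictDerivAt 0 s).hasDerivAt

lemma potential_mono {a b : ℝ → ℝ} (ha : Continuous a) (hb : Continuous b)
    (hab : ∀ r, 0 ≤ r → a r ≤ b r) (hb₀ : ∀ r, 0 ≤ r → 0 ≤ b r) {s s' : ℝ} (hs : 0 ≤ s)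
    (hss' : s ≤ s') : potential a s ≤ potential b s' := by
  have hint {c : ℝ → ℝ} (hc : Continuous c) (s : ℝ) :
      IntervalIntegrable (fun σ => c √σ) volume 0 s :=
    (hc.comp Real.continuous_sqrt).intervalIntegrable 0 s
  calc potential a s ≤ potential b s :=
        intervalIntegral.integral_mono hs (hint ha s) (hint hb s) fun σ =>
          hab _ (Real.sqrt_nonneg σ)
    _ ≤ potential b s' :=
        intervalIntegral.integral_mono_interval le_rfl hs hss'
          (Eventually.of_forall fun σ => hb₀ _ (Real.sqrt_nonneg σ)) (hint hb s')

variable {H : Type*} [NormedAddCommGroup H]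

/-- The energy of a single lattice site with value `z` and velocity `w`. The gradient term of the
wave energy, which would couple the sites, is replaced by `‖z‖²`. -/
def siteEnergy (a : ℝ → ℝ) (z w : H) : ℝ := ‖w‖ ^ 2 + ‖z‖ ^ 2 + potential a (‖z‖ ^ 2)

lemma norm_sq_add_norm_sq_le_siteEnergy {a : ℝ → ℝ} (ha₀ : ∀ r, 0 ≤ r → 0 ≤ a r) (z w : H) :
    ‖w‖ ^ 2 + ‖z‖ ^ 2 ≤ siteEnergy a z w :=
  le_add_of_nonneg_right (potential_nonneg ha₀ (sq_nonneg _))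

lemma siteEnergy_le {a b : ℝ → ℝ} (ha : Continuous a) (hb : Continuous b)
    (hab : ∀ r, 0 ≤ r → a r ≤ b r) (hb₀ : ∀ r, 0 ≤ r → 0 ≤ b r) {z w : H} {B C : ℝ}
    (hz : ‖z‖ ≤ B) (hw : ‖w‖ ≤ C) : siteEnergy a z w ≤ C ^ 2 + B ^ 2 + potential b (B ^ 2) := by
  have hz2 : ‖z‖ ^ 2 ≤ B ^ 2 := by gcongr
  have hpot := potential_mono ha hb hab hb₀ (sq_nonneg _) hz2
  unfold siteEnergy
  gcongr

lemma hasDerivWithinAt_siteEnergy [InnerProductSpace ℝ H] {a : ℝ → ℝ} (ha : Continuous a)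
    {z w : ℝ → H} {h : H} {S : Set ℝ} {t : ℝ} (hz : HasDerivWithinAt z (w t) S t)
    (hw : HasDerivWithinAt w (h - a ‖z t‖ • z t) S t) :
    HasDerivWithinAt (fun s => siteEnergy a (z s) (w s)) (2 * inner ℝ (w t) (h + z t)) S t := by
  have hpot := (hasDerivAt_potential ha (‖z t‖ ^ 2)).comp_hasDerivWithinAt t hz.norm_sq
  refine ((hw.norm_sq.add hz.norm_sq).add hpot).congr_deriv ?_
  rw [Real.sqrt_sq (norm_nonneg _), inner_sub_right, inner_add_right, real_inner_smul_right,
    real_inner_comm (w t) (z t)]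
  ring

end Energy

section APrioriBound

variable {d k : ℕ}

lemma norm_lap_le_of_norm_le {u : (Fin d → ℤ) → ℂ} {B : ℝ} (h : ∀ y, ‖u y‖ ≤ B)
    (x : Fin d → ℤ) : ‖lap u x‖ ≤ 4 * d * B :=
  calc ‖lap u x‖ ≤ ∑ _j : Fin d, 4 * B := by
        refine norm_sum_le_of_le _ fun j _ => ?_
        calc _ ≤ ‖u (x + Pi.single j 1)‖ + ‖u (x - Pi.single j 1)‖ + ‖2 * u x‖ :=
              norm_sub_le_of_le (norm_add_le _ _) le_rfl
          _ ≤ B + B + 2 * B := by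
              rw [norm_mul, Complex.norm_ofNat]
              gcongr <;> exact h _
          _ = 4 * B := by ring
    _ = 4 * d * B := by
        rw [Finset.sum_const, Finset.card_univ, Fintype.card_fin, nsmul_eq_mul]
        ring

lemma two_mul_inner_lap_add_le {z w : (Fin d → ℤ) → ℂ} {M : ℝ}
    (h : ∀ y, ‖w y‖ ^ 2 + ‖z y‖ ^ 2 ≤ M) (x : Fin d → ℤ) :
    2 * inner ℝ (w x) (lap z x + z x) ≤ (8 * d + 2) * M := by
  have hz (y : Fin d → ℤ) : ‖z y‖ ≤ √M := Real.le_sqrt_of_sq_le (by nlinarith [h y])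
  have hw : ‖w x‖ ≤ √M := Real.le_sqrt_of_sq_le (by nlinarith [h x])
  have hM : 0 ≤ M := le_trans (by positivity) (h x)
  calc 2 * inner ℝ (w x) (lap z x + z x) ≤ 2 * (‖w x‖ * ‖lap z x + z x‖) := by
        gcongr
        exact real_inner_le_norm _ _
    _ ≤ 2 * (√M * (4 * d * √M + √M)) := by
        gcongr
        exact norm_add_le_of_le (norm_lap_le_of_norm_le hz x) (hz x)
    _ = (8 * d + 2) * (√M * √M) := by ring
    _ = (8 * d + 2) * M := by rw [Real.mul_self_sqrt hM]

theorem EvolutionSol.norm_sq_le {a : ℝ → ℝ} (ha : Continuous a) (ha₀ : ∀ r, 0 ≤ r → 0 ≤ a r)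
    {f g : (Fin d → ℤ) → ℂ} {T : ℝ} {u u1 u2 : ℝ → (Fin d → ℤ) → ℂ}
    (h : EvolutionSol k (waveOp fun z => -(a ‖z‖ • z)) f g (Set.Icc 0 T) u u1 u2) {E : ℝ}
    (hE : ∀ x, siteEnergy a (f x) (g x) ≤ E) {t : ℝ} (ht : t ∈ Set.Icc 0 T) (x : Fin d → ℤ) :
    ‖u t x‖ ^ 2 ≤ 2 * E * Real.exp (2 * (8 * d + 2) * t) := by
  have hc := h.isC2
  have hle := norm_sq_add_norm_sq_le_siteEnergy (H := ℂ) ha₀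
  obtain ⟨B₀, hB₀⟩ := hc.cont0.exists_norm_le hc.mem0 isCompact_Icc
  obtain ⟨B₁, hB₁⟩ := hc.cont1.exists_norm_le hc.mem1 isCompact_Icc
  have hder (y : Fin d → ℤ) (s : ℝ) (hs : s ∈ Set.Icc 0 T) :
      HasDerivWithinAt (fun s => siteEnergy a (u s y) (u1 s y))
        (2 * inner ℝ (u1 s y) (lap (u s) y + u s y)) (Set.Icc 0 T) s := by
    refine hasDerivWithinAt_siteEnergy ha (hc.hder1.hasDerivWithinAt hc.mem0 hc.mem1 hs y) ?_
    have hu1 := hc.hder2.hasDerivWithinAt hc.mem1 hc.mem2 hs y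
    rwa [h.eqn s hs, waveOp, ← sub_eq_add_neg] at hu1
  calc ‖u t x‖ ^ 2 ≤ siteEnergy a (u t x) (u1 t x) :=
        (le_add_of_nonneg_left (sq_nonneg _)).trans (hle _ _)
    _ ≤ 2 * E * Real.exp (2 * (8 * d + 2) * t) :=
        le_mul_exp_of_deriv_le_iSup (by positivity) hder
          (fun s _ M hM => two_mul_inner_lap_add_le fun y => (hle _ _).trans (hM y))
          (fun y => by rw [h.init, h.init']; exact hE y)
          (le_trans (by positivity) ((hle _ _).trans (hE 0)))
          (fun y s hs => siteEnergy_le ha ha (fun _ _ => le_rfl) ha₀ (hB₀ s hs y) (hB₁ s hs y))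
          x ht

end APrioriBound

section PowerNonlinearity

variable {d k : ℕ} {p μ T : ℝ} {f g : (Fin d → ℤ) → ℂ} {S : Set ℝ}
  {u u1 u2 v v1 v2 : ℝ → (Fin d → ℤ) → ℂ}

lemma psol_iff_evolutionSol :
    PSol d k p μ f g S u u1 u2 ↔
      EvolutionSol k (waveOp fun z => μ • ‖z‖ ^ (p - 1) • z) f g S u u1 u2 := by
  have heqn (t : ℝ) :
      (∀ x, u2 t x - lap (u t) x = (μ : ℂ) * ((‖u t x‖ ^ (p - 1) : ℝ) : ℂ) * u t x) ↔
        u2 t = waveOp (fun z => μ • ‖z‖ ^ (p - 1) • z) (u t) := by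
    simp only [funext_iff, waveOp, Complex.real_smul, sub_eq_iff_eq_add', mul_assoc]
  constructor
  · rintro ⟨hc, he, hf, hg⟩
    exact ⟨hc, fun t ht => (heqn t).1 (he t ht), funext hf, funext hg⟩
  · rintro ⟨hc, he, hf, hg⟩
    exact ⟨hc, fun t ht => (heqn t).2 (he t ht), congrFun hf, congrFun hg⟩

lemma waveOp_truncPow_eq {q R : ℝ} {u : (Fin d → ℤ) → ℂ} (hu : ∀ x, ‖u x‖ ≤ R) :
    waveOp (μ • truncPow q R) u = waveOp (fun z => μ • ‖z‖ ^ q • z) u := by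
  ext x
  simp only [waveOp, Pi.smul_apply, truncPow_of_norm_le (hu x)]

lemma isWeightedLipschitz_waveOp_truncPow {q R : ℝ} (hq : 0 ≤ q) (hR : 0 ≤ R) :
    IsWeightedLipschitz (d := d) k (waveOp (μ • truncPow q R)) :=
  isWeightedLipschitz_waveOp ((lipschitzWith_smul μ).comp (lipschitzWith_truncPow hq hR))
    (by simp [truncPow])

theorem PSol.unique (hp : 1 ≤ p) (hu : PSol d k p μ f g (Set.Icc 0 T) u u1 u2)
    (hv : PSol d k p μ f g (Set.Icc 0 T) v v1 v2) {t : ℝ} (ht : t ∈ Set.Icc 0 T) : u t = v t := by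
  obtain ⟨Bu, hBu⟩ := hu.1.cont0.exists_norm_le hu.1.mem0 isCompact_Icc
  obtain ⟨Bv, hBv⟩ := hv.1.cont0.exists_norm_le hv.1.mem0 isCompact_Icc
  set R := max Bu Bv
  have hR : 0 ≤ R := (norm_nonneg _).trans ((hBu t ht 0).trans (le_max_left _ _))
  exact EvolutionSol.eq_of_isWeightedLipschitz
    (isWeightedLipschitz_waveOp_truncPow (sub_nonneg.2 hp) hR)
    ((psol_iff_evolutionSol.1 hu).congr fun s hs =>
      (waveOp_truncPow_eq fun x => (hBu s hs x).trans (le_max_left _ _)).symm)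
    ((psol_iff_evolutionSol.1 hv).congr fun s hs =>
      (waveOp_truncPow_eq fun x => (hBv s hs x).trans (le_max_right _ _)).symm) ht

lemma norm_sq_le_of_evolutionSol_truncPow {q R B C : ℝ} (hq : 0 ≤ q) (hμ : μ ≤ 0) (hR : 0 ≤ R)
    (hf : ∀ x, ‖f x‖ ≤ B) (hg : ∀ x, ‖g x‖ ≤ C)
    (h : EvolutionSol k (waveOp (μ • truncPow q R)) f g (Set.Icc 0 T) u u1 u2) {t : ℝ}
    (ht : t ∈ Set.Icc 0 T) (x : Fin d → ℤ) :
    ‖u t x‖ ^ 2 ≤ 2 * (C ^ 2 + B ^ 2 + potential (fun r => -μ * r ^ q) (B ^ 2)) *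
      Real.exp (2 * (8 * d + 2) * t) := by
  have hμ' : 0 ≤ -μ := neg_nonneg.2 hμ
  have hN : μ • truncPow q R = fun z : ℂ => -((-μ * min ‖z‖ R ^ q) • z) := by
    ext1 z
    simp only [Pi.smul_apply, truncPow]
    module
  rw [hN] at h
  refine h.norm_sq_le (a := fun r => -μ * min r R ^ q) ?_ (fun r hr => by positivity)
    (fun x => siteEnergy_le ?_ ?_ (fun r hr => ?_) (fun r hr => by positivity) (hf x) (hg x)) ht x
  · exact ((continuous_id.min continuous_const).rpow_const fun _ => .inr hq).const_mul (-μ)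
  · exact ((continuous_id.min continuous_const).rpow_const fun _ => .inr hq).const_mul (-μ)
  · exact (continuous_id.rpow_const fun _ => .inr hq).const_mul (-μ)
  · gcongr
    exact min_le_left r R

theorem exists_psol (hp : 1 ≤ p) (hμ : μ ≤ 0) (hf : w2 k f < ⊤) (hg : w2 k g < ⊤) (hT : 0 ≤ T) :
    ∃ u u1 u2, PSol d k p μ f g (Set.Icc 0 T) u u1 u2 := by
  obtain ⟨B, hB⟩ := exists_norm_le_of_w2_lt_top hf
  obtain ⟨C, hC⟩ := exists_norm_le_of_w2_lt_top hg
  have hq : 0 ≤ p - 1 := sub_nonneg.2 hp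
  set E := C ^ 2 + B ^ 2 + potential (fun r => -μ * r ^ (p - 1)) (B ^ 2)
  set R := √(2 * E * Real.exp (2 * (8 * d + 2) * T))
  have hR : 0 ≤ R := Real.sqrt_nonneg _
  obtain ⟨u, u1, u2, h⟩ :=
    exists_evolutionSol (isWeightedLipschitz_waveOp_truncPow (μ := μ) hq hR) hf hg hT
  have hu : ∀ t ∈ Set.Icc 0 T, ∀ x, ‖u t x‖ ≤ R := fun t ht x => Real.le_sqrt_of_sq_le <| by
    refine (norm_sq_le_of_evolutionSol_truncPow hq hμ hR hB hC h ht x).trans ?_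
    have hE : 0 ≤ E := by
      have hpot : 0 ≤ potential (fun r => -μ * r ^ (p - 1)) (B ^ 2) :=
        potential_nonneg (fun r hr => mul_nonneg (neg_nonneg.2 hμ) (Real.rpow_nonneg hr _))
          (sq_nonneg B)
      positivity
    gcongr
    exact ht.2
  exact ⟨u, u1, u2, psol_iff_evolutionSol.2 (h.congr fun t ht => waveOp_truncPow_eq (hu t ht))⟩

end PowerNonlinearity

theorem stmt16_general (d k : ℕ) {p μ : ℝ} (hp : 1 ≤ p) (hμ : μ ≤ 0) {f g : (Fin d → ℤ) → ℂ}
    (hf : w2 k f < ⊤) (hg : w2 k g < ⊤) {T : ℝ} (hT : 0 < T) :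
    ∃ u u1 u2, PSol d k p μ f g (Set.Icc 0 T) u u1 u2 ∧
      ∀ v v1 v2, PSol d k p μ f g (Set.Icc 0 T) v v1 v2 →
        ∀ t ∈ Set.Icc (0 : ℝ) T, ∀ x, v t x = u t x := by
  obtain ⟨u, u1, u2, hu⟩ := exists_psol hp hμ hf hg hT.le
  exact ⟨u, u1, u2, hu, fun v v1 v2 hv t ht x => congrFun (hv.unique hp hu ht) x⟩

/-- global well-posedness of the defocusing semilinear discrete wave
equation `∂ₜ²u - Δu = -|u|^{p-1}u` with data `f, g ∈ ℓ^{2,k}`, `k ∈ {0,1}`: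
for every `T > 0` there is a unique classical solution on `[0,T]`. -/
theorem stmt16 (d : ℕ) (hd : 0 < d) (k : ℕ) (hk : k = 0 ∨ k = 1) (p : ℝ) (hp : 1 < p)
    (f g : (Fin d → ℤ) → ℂ) (hf : w2 k f < ⊤) (hg : w2 k g < ⊤) :
    ∀ T : ℝ, 0 < T →
      ∃ u u1 u2, PSol d k p (-1) f g (Set.Icc 0 T) u u1 u2 ∧
        ∀ v v1 v2, PSol d k p (-1) f g (Set.Icc 0 T) v v1 v2 →
          ∀ t ∈ Set.Icc (0 : ℝ) T, ∀ x, v t x = u t x :=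
  fun _ hT => stmt16_general d k hp.le (by norm_num) hf hg hT
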